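/- arXiv:1409.7499 — 2 statements merged into one kernel-verified Lean document; each statement's English description precedes it below -/
import Mathlib

section
/- Let r₂ > 0 and let F : ℝ^{3×3} → ℝ be twice continuously differentiable with F(0) = 0. Suppose Q : ℝ³ → ℝ^{3×3} is twice continuously differentiable, Q(x) is symmetric and traceless and |Q(x)| ≤ r₂ for every x ∈ ℝ³, Q solves the stationary equation −ΔQ(x) + L[∇F(Q(x))] = 0 for all x ∈ ℝ³, and the functions x ↦ |∇Q(x)|² and x ↦ F(Q(x)) are Lebesgue integrable on ℝ³. Then the Pochožaev identity ∫_{ℝ³} ( (1/2)|∇Q(x)|² + 3 F(Q(x)) ) dx = 0 holds. -/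
open MeasureTheory Matrix

noncomputable section

/-- `ℝ³` with the Euclidean norm. -/
abbrev E3 : Type := EuclideanSpace ℝ (Fin 3)
/-- the space of `3×3` real matrices -/
abbrev Mat : Type := Matrix (Fin 3) (Fin 3) ℝ

attribute [local instance] Matrix.normedAddCommGroup Matrix.normedSpace

/-- Frobenius inner product `A : B`. -/
def frob (A B : Mat) : ℝ := ∑ i, ∑ j, A i j * B i j
/-- Frobenius norm `|A|`. -/
def frobNorm (A : Mat) : ℝ := Real.sqrt (frob A A)
/-- `L[A] = A - (1/3) tr A · I`, projection onto traceless matrices. -/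
def tracelessPart (A : Mat) : Mat := A - (Matrix.trace A / 3) • (1 : Mat)
/-- partial derivative `∂ₖ f` of a scalar function on `ℝ³` -/
def pd (k : Fin 3) (f : E3 → ℝ) (x : E3) : ℝ := fderiv ℝ f x (EuclideanSpace.single k 1)
/-- componentwise Laplacian `ΔQ` of a matrix-valued map -/
def lapM (Q : E3 → Mat) (x : E3) : Mat :=
  Matrix.of fun i j => ∑ k, pd k (fun y => pd k (fun z => Q z i j) y) x
/-- `|∇Q(x)|² = Σ_{k,i,j} (∂ₖ Q_{ij}(x))²` -/
def gradNormSq (Q : E3 → Mat) (x : E3) : ℝ := ∑ k, ∑ i, ∑ j, (pd k (fun y => Q y i j) x) ^ 2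
/-- Frobenius gradient `∇F(A)` of a function on matrices, with entries `∂F/∂A_{ij}`. -/
def matGrad (F : Mat → ℝ) (A : Mat) : Mat :=
  Matrix.of fun i j => fderiv ℝ F A (Matrix.single i j 1)

/-! The stress-energy tensor `S a v = ⟪∂ₐu, ∂ᵥu⟫ - ⟪a, v⟫ (½|∇u|² + w)` of a map `u` is divergence
free as soon as `⟪Δu, ∂ᵥu⟫ = ∂ᵥw` for all `v`. An integrable divergence-free field has mean zero
(test it against `y ↦ ψ (c y)`, where `ψ` agrees with a linear functional near `0`, divide by `c`
and let `c → 0`), so the trace `(1 - d/2)|∇u|² - d w` of `S` integrates to zero. For `w = F ∘ Q`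
the equation for `Q` gives the hypothesis because `∂ᵥQ` is traceless, so that the projection `L` is
invisible when paired with it. -/

open Filter Topology InnerProductSpace Laplacian

section DivergenceFree

variable {E : Type*} [NormedAddCommGroup E] [NormedSpace ℝ E]

theorem exists_contDiff_hasCompactSupport_eventuallyEq [FiniteDimensional ℝ E] {G : Type*}
    [NormedAddCommGroup G] [NormedSpace ℝ G] {n : ℕ∞} {f : E → G} (hf : ContDiff ℝ n f) (c : E) :
    ∃ ψ : E → G, ContDiff ℝ n ψ ∧ HasCompactSupport ψ ∧ ψ =ᶠ[𝓝 c] f := by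
  obtain ⟨b⟩ : Nonempty (ContDiffBump c) := inferInstance
  refine ⟨fun x => b x • f x, b.contDiff.smul hf, b.hasCompactSupport.smul_right, ?_⟩
  filter_upwards [b.eventuallyEq_one] with x hx
  simp [hx]

variable [MeasurableSpace E] [BorelSpace E] {μ : Measure E}

theorem tendsto_integral_mul_comp_smul {f φ : E → ℝ} (hf : Integrable f μ) (hφ : Continuous φ)
    {C : ℝ} (hC : ∀ x, ‖φ x‖ ≤ C) :
    Tendsto (fun c : ℝ => ∫ x, f x * φ (c • x) ∂μ) (𝓝 0) (𝓝 ((∫ x, f x ∂μ) * φ 0)) := by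
  rw [← integral_mul_const]
  refine tendsto_integral_filter_of_dominated_convergence (fun x => ‖f x‖ * C)
    (.of_forall fun c => ?_) (.of_forall fun c => .of_forall fun x => ?_) (hf.norm.mul_const C)
    (.of_forall fun x => ?_)
  · exact hf.aestronglyMeasurable.mul
      (hφ.comp (continuous_const_smul c)).aestronglyMeasurable
  · rw [norm_mul]
    gcongr
    exact hC _
  · have h : Continuous fun c : ℝ => f x * φ (c • x) := by fun_prop
    simpa using h.tendsto 0

variable [FiniteDimensional ℝ E] [μ.IsAddHaarMeasure] {ι : Type*} [Fintype ι] {T : ι → E → ℝ}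

theorem sum_integral_mul_fderiv_eq_zero {v : ι → E} (hT : ∀ k, ContDiff ℝ 1 (T k))
    (hdiv : ∀ x, ∑ k, fderiv ℝ (T k) x (v k) = 0) {g : E → ℝ} (hg : ContDiff ℝ 1 g)
    (hgc : HasCompactSupport g) : ∑ k, ∫ x, T k x * fderiv ℝ g x (v k) ∂μ = 0 := by
  have hT' (k) : Continuous fun x => fderiv ℝ (T k) x (v k) :=
    ((hT k).continuous_fderiv one_ne_zero).clm_apply continuous_const
  have hg' (k) : Continuous fun x => fderiv ℝ g x (v k) :=
    (hg.continuous_fderiv one_ne_zero).clm_apply continuous_const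
  have hT'g (k) : Integrable (fun x => fderiv ℝ (T k) x (v k) * g x) μ :=
    ((hT' k).mul hg.continuous).integrable_of_hasCompactSupport hgc.mul_left
  have hTg' (k) : Integrable (fun x => T k x * fderiv ℝ g x (v k)) μ :=
    ((hT k).continuous.mul (hg' k)).integrable_of_hasCompactSupport
      (hgc.fderiv_apply (𝕜 := ℝ) (v k)).mul_left
  have hTg (k) : Integrable (fun x => T k x * g x) μ :=
    ((hT k).continuous.mul hg.continuous).integrable_of_hasCompactSupport hgc.mul_left
  calc ∑ k, ∫ x, T k x * fderiv ℝ g x (v k) ∂μ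
      = -∑ k, ∫ x, fderiv ℝ (T k) x (v k) * g x ∂μ := by
        rw [← Finset.sum_neg_distrib]
        exact Finset.sum_congr rfl fun k _ => integral_mul_fderiv_eq_neg_fderiv_mul_of_integrable
          (hT'g k) (hTg' k) (hTg k) (fun x _ => (hT k).differentiable one_ne_zero x)
          fun x _ => hg.differentiable one_ne_zero x
    _ = -∫ x, (∑ k, fderiv ℝ (T k) x (v k)) * g x ∂μ := by
        simp only [Finset.sum_mul]
        rw [integral_finsetSum _ fun k _ => hT'g k]
    _ = 0 := by simp [hdiv]

theorem sum_integral_mul_clm_eq_zero {v : ι → E} (hT : ∀ k, ContDiff ℝ 1 (T k))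
    (hTi : ∀ k, Integrable (T k) μ) (hdiv : ∀ x, ∑ k, fderiv ℝ (T k) x (v k) = 0)
    (ℓ : E →L[ℝ] ℝ) : ∑ k, (∫ x, T k x ∂μ) * ℓ (v k) = 0 := by
  obtain ⟨ψ, hψ, hψc, hψℓ⟩ :=
    exists_contDiff_hasCompactSupport_eventuallyEq (n := 1) ℓ.contDiff (0 : E)
  have hψ' (k) : Continuous fun y => fderiv ℝ ψ y (v k) :=
    (hψ.continuous_fderiv one_ne_zero).clm_apply continuous_const
  have hψ0 (k) : fderiv ℝ ψ 0 (v k) = ℓ (v k) := by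
    rw [hψℓ.fderiv_eq, ℓ.fderiv]
  have hlim : Tendsto (fun c : ℝ => ∑ k, ∫ x, T k x * fderiv ℝ ψ (c • x) (v k) ∂μ) (𝓝[≠] 0)
      (𝓝 (∑ k, (∫ x, T k x ∂μ) * ℓ (v k))) := by
    refine tendsto_finsetSum _ fun k _ => ?_
    rw [← hψ0 k]
    obtain ⟨C, hC⟩ := (hψc.fderiv_apply (𝕜 := ℝ) (v k)).exists_bound_of_continuous (hψ' k)
    exact (tendsto_integral_mul_comp_smul (hTi k) (hψ' k) hC).mono_left nhdsWithin_le_nhds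
  have hzero : ∀ᶠ c : ℝ in 𝓝[≠] 0, ∑ k, ∫ x, T k x * fderiv ℝ ψ (c • x) (v k) ∂μ = 0 := by
    filter_upwards [self_mem_nhdsWithin] with c hc
    have h := sum_integral_mul_fderiv_eq_zero (μ := μ) hT hdiv
      (hψ.comp (contDiff_const_smul c)) (hψc.comp_homeomorph (Homeomorph.smulOfNeZero c hc))
    simp only [Function.comp_def, fderiv_comp_smul, _root_.smul_apply, smul_eq_mul,
      mul_left_comm _ c, integral_const_mul, ← Finset.mul_sum] at h
    exact (mul_eq_zero.1 h).resolve_left hc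
  exact tendsto_nhds_unique_of_eventuallyEq hlim tendsto_const_nhds hzero

theorem integral_eq_zero_of_sum_fderiv_eq_zero (b : Module.Basis ι ℝ E)
    (hT : ∀ k, ContDiff ℝ 1 (T k)) (hTi : ∀ k, Integrable (T k) μ)
    (hdiv : ∀ x, ∑ k, fderiv ℝ (T k) x (b k) = 0) (l : ι) : ∫ x, T l x ∂μ = 0 := by
  classical
  simpa [Finsupp.single_apply] using
    sum_integral_mul_clm_eq_zero hT hTi hdiv (LinearMap.toContinuousLinearMap (b.coord l))

end DivergenceFree

section SecondDerivative

variable {E G : Type*} [NormedAddCommGroup E] [NormedAddCommGroup G] [NormedSpace ℝ G] {f : E → G}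

theorem contDiff_fderiv_apply [NormedSpace ℝ E] {m n : WithTop ℕ∞} (hf : ContDiff ℝ n f)
    (hmn : m + 1 ≤ n) (a : E) : ContDiff ℝ m fun x => fderiv ℝ f x a :=
  (hf.fderiv_right hmn).clm_apply contDiff_const

theorem differentiable_fderiv [NormedSpace ℝ E] (hf : ContDiff ℝ 2 f) :
    Differentiable ℝ (fderiv ℝ f) :=
  (hf.fderiv_right one_add_one_eq_two.le).differentiable one_ne_zero

theorem differentiable_fderiv_apply [NormedSpace ℝ E] (hf : ContDiff ℝ 2 f) (a : E) :
    Differentiable ℝ fun x => fderiv ℝ f x a :=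
  (differentiable_fderiv hf).clm_apply (differentiable_const a)

theorem fderiv_fderiv_apply [NormedSpace ℝ E] {x : E} (hf : DifferentiableAt ℝ (fderiv ℝ f) x)
    (a v : E) : fderiv ℝ (fun y => fderiv ℝ f y v) x a = fderiv ℝ (fderiv ℝ f) x a v := by
  simp [fderiv_clm_apply hf (differentiableAt_const v)]

theorem laplacian_eq_sum_fderiv_fderiv [InnerProductSpace ℝ E] [FiniteDimensional ℝ E]
    {ι : Type*} [Fintype ι] (b : OrthonormalBasis ι ℝ E) (f : E → G) (x : E) :
    Δ f x = ∑ k, fderiv ℝ (fderiv ℝ f) x (b k) (b k) := by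
  simp [laplacian_eq_iteratedFDeriv_orthonormalBasis f b, iteratedFDeriv_two_apply]

end SecondDerivative

section StressEnergy

variable {E G V ι : Type*} [NormedAddCommGroup E] [InnerProductSpace ℝ E] [NormedAddCommGroup G]
  [NormedSpace ℝ G] [NormedAddCommGroup V] [InnerProductSpace ℝ V] [Fintype ι]
  (b : OrthonormalBasis ι ℝ E) {u : E → V} {w : E → ℝ}

/-- The squared Hilbert-Schmidt norm `|∇u|²` of the derivative of `u`, computed in the orthonormal
basis `b`; the norm on `E →L[ℝ] G` is the operator norm, which is a different one. -/
def fderivNormSq (u : E → G) (x : E) : ℝ := ∑ k, ‖fderiv ℝ u x (b k)‖ ^ 2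

/-- The energy density `½|∇u|² + w` of a map `u` in the potential `w`. -/
def energyDensity (u : E → G) (w : E → ℝ) (x : E) : ℝ := 1 / 2 * fderivNormSq b u x + w x

/-- The stress-energy tensor `⟪∂ₐu, ∂ᵥu⟫ - ⟪a, v⟫ (½|∇u|² + w)`, as a bilinear form in the
directions `a` and `v`. -/
def stressEnergy (u : E → V) (w : E → ℝ) (a v x : E) : ℝ :=
  ⟪fderiv ℝ u x a, fderiv ℝ u x v⟫_ℝ - ⟪a, v⟫_ℝ * energyDensity b u w x

theorem contDiff_energyDensity {m n : WithTop ℕ∞} (hu : ContDiff ℝ n u) (hmn : m + 1 ≤ n)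
    (hw : ContDiff ℝ m w) : ContDiff ℝ m (energyDensity b u w) :=
  (contDiff_const.mul
    (ContDiff.sum fun k _ => (contDiff_fderiv_apply hu hmn (b k)).norm_sq ℝ)).add hw

theorem contDiff_stressEnergy {m n : WithTop ℕ∞} (hu : ContDiff ℝ n u) (hmn : m + 1 ≤ n)
    (hw : ContDiff ℝ m w) (a v : E) : ContDiff ℝ m (stressEnergy b u w a v) :=
  ((contDiff_fderiv_apply hu hmn a).inner ℝ (contDiff_fderiv_apply hu hmn v)).sub
    (contDiff_const.mul (contDiff_energyDensity b hu hmn hw))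

theorem fderiv_energyDensity (hu : ContDiff ℝ 2 u) {x : E} (hw : DifferentiableAt ℝ w x) (v : E) :
    fderiv ℝ (energyDensity b u w) x v =
      ∑ k, ⟪fderiv ℝ u x (b k), fderiv ℝ (fderiv ℝ u) x v (b k)⟫_ℝ + fderiv ℝ w x v := by
  have hsq (k) : HasFDerivAt (fun y => ‖fderiv ℝ u y (b k)‖ ^ 2) _ x :=
    (differentiable_fderiv_apply hu (b k) x).hasFDerivAt.norm_sq
  have he : HasFDerivAt (energyDensity b u w) _ x :=
    ((HasFDerivAt.fun_sum fun k _ => hsq k).const_mul (1 / 2)).add hw.hasFDerivAt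
  simp [he.fderiv, fderiv_fderiv_apply (differentiable_fderiv hu x), Finset.mul_sum]

theorem fderiv_stressEnergy (hu : ContDiff ℝ 2 u) (hw : ContDiff ℝ 1 w) (a v x : E) :
    fderiv ℝ (stressEnergy b u w a v) x a =
      ⟪fderiv ℝ (fderiv ℝ u) x a a, fderiv ℝ u x v⟫_ℝ
        + ⟪fderiv ℝ u x a, fderiv ℝ (fderiv ℝ u) x v a⟫_ℝ
        - ⟪a, v⟫_ℝ * fderiv ℝ (energyDensity b u w) x a := by
  have hu' (c) : DifferentiableAt ℝ (fun y => fderiv ℝ u y c) x :=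
    differentiable_fderiv_apply hu c x
  have he : DifferentiableAt ℝ (energyDensity b u w) x :=
    (contDiff_energyDensity b hu one_add_one_eq_two.le hw).differentiable one_ne_zero x
  have hsymm : IsSymmSndFDerivAt ℝ u x := hu.contDiffAt.isSymmSndFDerivAt (by simp)
  have hS : fderiv ℝ (stressEnergy b u w a v) x =
      fderiv ℝ (fun y => ⟪fderiv ℝ u y a, fderiv ℝ u y v⟫_ℝ) x
        - ⟪a, v⟫_ℝ • fderiv ℝ (energyDensity b u w) x := by
    rw [← fderiv_const_mul he]
    exact fderiv_fun_sub ((hu' a).inner ℝ (hu' v)) (he.const_mul _)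
  simp [hS, fderiv_inner_apply ℝ (hu' a) (hu' v),
    fderiv_fderiv_apply (differentiable_fderiv hu x), hsymm v a, add_comm]

theorem sum_fderiv_stressEnergy [FiniteDimensional ℝ E] (hu : ContDiff ℝ 2 u)
    (hw : ContDiff ℝ 1 w) (v x : E) :
    ∑ k, fderiv ℝ (stressEnergy b u w (b k) v) x (b k) =
      ⟪Δ u x, fderiv ℝ u x v⟫_ℝ - fderiv ℝ w x v := by
  have hexpand : ∑ k, ⟪b k, v⟫_ℝ * fderiv ℝ (energyDensity b u w) x (b k) =
      fderiv ℝ (energyDensity b u w) x v := by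
    conv_rhs => rw [← b.sum_repr' v]
    simp
  simp only [fderiv_stressEnergy b hu hw, Finset.sum_sub_distrib, Finset.sum_add_distrib, hexpand,
    ← sum_inner, ← laplacian_eq_sum_fderiv_fderiv]
  rw [fderiv_energyDensity b hu (hw.differentiable one_ne_zero x)]
  ring

theorem sum_stressEnergy_self (u : E → V) (w : E → ℝ) (x : E) :
    ∑ k, stressEnergy b u w (b k) (b k) x =
      -(((Fintype.card ι : ℝ) / 2 - 1) * fderivNormSq b u x + Fintype.card ι * w x) := by
  simp only [stressEnergy, energyDensity, fderivNormSq, real_inner_self_eq_norm_sq, b.norm_eq_one,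
    Finset.sum_sub_distrib, Finset.sum_const, Finset.card_univ, nsmul_eq_mul]
  ring

variable [MeasurableSpace E] [BorelSpace E] {μ : Measure E}

theorem integrable_inner_fderiv (hu : ContDiff ℝ 1 u) (hint : Integrable (fderivNormSq b u) μ)
    (k l : ι) : Integrable (fun x => ⟪fderiv ℝ u x (b k), fderiv ℝ u x (b l)⟫_ℝ) μ := by
  have hle (i x) : ‖fderiv ℝ u x (b i)‖ ^ 2 ≤ fderivNormSq b u x :=
    Finset.single_le_sum (f := fun k => ‖fderiv ℝ u x (b k)‖ ^ 2) (fun _ _ => by positivity)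
      (Finset.mem_univ i)
  have hcont (i) : Continuous fun x => fderiv ℝ u x (b i) :=
    (hu.continuous_fderiv one_ne_zero).clm_apply continuous_const
  refine hint.mono' ((hcont k).inner (hcont l)).aestronglyMeasurable (.of_forall fun x => ?_)
  calc ‖⟪fderiv ℝ u x (b k), fderiv ℝ u x (b l)⟫_ℝ‖
      ≤ ‖fderiv ℝ u x (b k)‖ * ‖fderiv ℝ u x (b l)‖ := norm_inner_le_norm _ _
    _ ≤ fderivNormSq b u x := by
        linarith [two_mul_le_add_sq ‖fderiv ℝ u x (b k)‖ ‖fderiv ℝ u x (b l)‖, hle k x, hle l x]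

theorem integrable_stressEnergy (hu : ContDiff ℝ 1 u) (hint : Integrable (fderivNormSq b u) μ)
    (hwint : Integrable w μ) (k l : ι) : Integrable (stressEnergy b u w (b k) (b l)) μ :=
  (integrable_inner_fderiv b hu hint k l).sub (((hint.const_mul _).add hwint).const_mul _)

theorem integral_pohozaev [FiniteDimensional ℝ E] [μ.IsAddHaarMeasure] (hu : ContDiff ℝ 2 u)
    (hw : ContDiff ℝ 1 w) (heq : ∀ x v, ⟪Δ u x, fderiv ℝ u x v⟫_ℝ = fderiv ℝ w x v)
    (hint : Integrable (fderivNormSq b u) μ) (hwint : Integrable w μ) :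
    ∫ x, (((Fintype.card ι : ℝ) / 2 - 1) * fderivNormSq b u x + Fintype.card ι * w x) ∂μ = 0 := by
  have hSint (k l) : Integrable (stressEnergy b u w (b k) (b l)) μ :=
    integrable_stressEnergy b (hu.of_le one_le_two) hint hwint k l
  have hmean (l) : ∫ x, stressEnergy b u w (b l) (b l) x ∂μ = 0 :=
    integral_eq_zero_of_sum_fderiv_eq_zero (T := fun k => stressEnergy b u w (b k) (b l)) b.toBasis
      (fun k => contDiff_stressEnergy b hu one_add_one_eq_two.le hw (b k) (b l))
      (fun k => hSint k l)
      (fun x => by simp [sum_fderiv_stressEnergy b hu hw, heq]) l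
  have htrace : ∫ x, ∑ k, stressEnergy b u w (b k) (b k) x ∂μ = 0 := by
    rw [integral_finsetSum _ fun k _ => hSint k k]
    exact Finset.sum_eq_zero fun k _ => hmean k
  simpa only [sum_stressEnergy_self, integral_neg, neg_eq_zero] using htrace

end StressEnergy

section MatrixFields

/-- The matrix `A` as a vector of `ℝ^{3·3}`. Passing to it turns the Frobenius inner product into
the Euclidean one, whereas the norm on `Mat` itself is the sup norm of the entries. -/
def frobeniusVec (A : Mat) : EuclideanSpace ℝ (Fin 3 × Fin 3) := WithLp.toLp 2 fun p => A p.1 p.2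

theorem inner_frobeniusVec (A B : Mat) : ⟪frobeniusVec A, frobeniusVec B⟫_ℝ = frob A B := by
  simp [frobeniusVec, frob, PiLp.inner_apply, Fintype.sum_prod_type, mul_comm]

theorem norm_sq_frobeniusVec (A : Mat) : ‖frobeniusVec A‖ ^ 2 = ∑ i, ∑ j, A i j ^ 2 := by
  rw [← real_inner_self_eq_norm_sq, inner_frobeniusVec]
  simp only [frob, sq]

theorem fderiv_apply_eq_frob_matGrad (F : Mat → ℝ) (A B : Mat) :
    fderiv ℝ F A B = frob (matGrad F A) B := by
  have hB : B = ∑ i, ∑ j, B i j • Matrix.single i j (1 : ℝ) := by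
    simpa using Matrix.matrix_eq_sum_single B
  conv_lhs => rw [hB]
  simp only [map_sum, map_smul, frob, matGrad, Matrix.of_apply, smul_eq_mul, mul_comm]

theorem frob_tracelessPart_left (A : Mat) {B : Mat} (hB : B.trace = 0) :
    frob (tracelessPart A) B = frob A B := by
  have hone : ∑ i, ∑ j, (1 : Mat) i j * B i j = 0 := by
    simpa [Matrix.one_apply, Matrix.trace] using hB
  simp [frob, tracelessPart, sub_mul, mul_assoc, ← Finset.mul_sum, hone]

variable {Q : E3 → Mat} {x : E3}

theorem fderiv_entry (hQ : DifferentiableAt ℝ Q x) (i j : Fin 3) (v : E3) :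
    fderiv ℝ (fun y => Q y i j) x v = fderiv ℝ Q x v i j := by
  have hrow := hasFDerivAt_pi'.1 hQ.hasFDerivAt i
  rw [(hasFDerivAt_pi'.1 hrow j).fderiv]
  rfl

theorem trace_fderiv_eq_zero (hQ : DifferentiableAt ℝ Q x) (htr : ∀ y, (Q y).trace = 0) (v : E3) :
    (fderiv ℝ Q x v).trace = 0 := by
  have htrQ : HasFDerivAt (fun y => (Q y).trace) _ x :=
    (LinearMap.toContinuousLinearMap (Matrix.traceLinearMap (Fin 3) ℝ ℝ)).hasFDerivAt.comp x
      hQ.hasFDerivAt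
  simp only [htr] at htrQ
  exact DFunLike.congr_fun (htrQ.unique (hasFDerivAt_const 0 x)) v

theorem contDiff_entry {n : ℕ∞} (hQ : ContDiff ℝ n Q) (i j : Fin 3) :
    ContDiff ℝ n fun y => Q y i j :=
  contDiff_pi.1 (contDiff_pi.1 hQ i) j

theorem contDiff_frobeniusVec_comp {n : ℕ∞} (hQ : ContDiff ℝ n Q) :
    ContDiff ℝ n fun y => frobeniusVec (Q y) :=
  contDiff_euclidean.2 fun p => contDiff_entry hQ p.1 p.2

theorem fderiv_frobeniusVec_comp (hQ : DifferentiableAt ℝ Q x) (v : E3) :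
    fderiv ℝ (fun y => frobeniusVec (Q y)) x v = frobeniusVec (fderiv ℝ Q x v) := by
  have hvec : DifferentiableAt ℝ (fun y => frobeniusVec (Q y)) x :=
    differentiableAt_euclidean.2 fun p =>
      differentiableAt_pi.1 (differentiableAt_pi.1 hQ p.1) p.2
  ext p
  have hproj := (EuclideanSpace.proj (𝕜 := ℝ) p).hasFDerivAt.comp x hvec.hasFDerivAt
  exact (DFunLike.congr_fun hproj.fderiv v).symm.trans (fderiv_entry hQ p.1 p.2 v)

theorem sum_pd_pd_eq_laplacian {f : E3 → ℝ} (hf : ContDiff ℝ 2 f) (x : E3) :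
    ∑ k, pd k (pd k f) x = Δ f x := by
  simp only [laplacian_eq_sum_fderiv_fderiv (EuclideanSpace.basisFun (Fin 3) ℝ),
    EuclideanSpace.basisFun_apply, ← fderiv_fderiv_apply (differentiable_fderiv hf x)]
  rfl

theorem laplacian_frobeniusVec_comp (hQ : ContDiff ℝ 2 Q) (x : E3) :
    Δ (fun y => frobeniusVec (Q y)) x = frobeniusVec (lapM Q x) := by
  ext p
  have hproj := (contDiff_frobeniusVec_comp hQ).contDiffAt.laplacian_CLM_comp_left (x := x)
    (l := EuclideanSpace.proj (𝕜 := ℝ) p)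
  exact hproj.symm.trans (sum_pd_pd_eq_laplacian (contDiff_entry hQ p.1 p.2) x).symm

theorem fderivNormSq_frobeniusVec_comp (hQ : DifferentiableAt ℝ Q x) :
    fderivNormSq (EuclideanSpace.basisFun (Fin 3) ℝ) (fun y => frobeniusVec (Q y)) x =
      gradNormSq Q x := by
  simp only [fderivNormSq, gradNormSq, pd, fderiv_entry hQ, fderiv_frobeniusVec_comp hQ,
    norm_sq_frobeniusVec, EuclideanSpace.basisFun_apply]

theorem frob_lapM_fderiv {F : Mat → ℝ} (hF : DifferentiableAt ℝ F (Q x))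
    (hQ : DifferentiableAt ℝ Q x) (htr : ∀ y, (Q y).trace = 0)
    (heq : -lapM Q x + tracelessPart (matGrad F (Q x)) = 0) (v : E3) :
    frob (lapM Q x) (fderiv ℝ Q x v) = fderiv ℝ (fun y => F (Q y)) x v := by
  have hchain : fderiv ℝ (fun y => F (Q y)) x v = fderiv ℝ F (Q x) (fderiv ℝ Q x v) :=
    DFunLike.congr_fun (fderiv_comp x hF hQ) v
  rw [neg_add_eq_zero.1 heq, frob_tracelessPart_left _ (trace_fderiv_eq_zero hQ htr v),
    hchain, fderiv_apply_eq_frob_matGrad]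

end MatrixFields

theorem stmt1_general (F : Mat → ℝ) (hF : ContDiff ℝ 1 F) (Q : E3 → Mat) (hQ : ContDiff ℝ 2 Q)
    (htr : ∀ x, Matrix.trace (Q x) = 0)
    (heq : ∀ x, -lapM Q x + tracelessPart (matGrad F (Q x)) = 0)
    (hint1 : Integrable (fun x => gradNormSq Q x)) (hint2 : Integrable (fun x => F (Q x))) :
    ∫ x : E3, ((1 : ℝ) / 2 * gradNormSq Q x + 3 * F (Q x)) = 0 := by
  have hQd := hQ.differentiable two_ne_zero
  have hnorm : fderivNormSq (EuclideanSpace.basisFun (Fin 3) ℝ) (fun x => frobeniusVec (Q x)) =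
      gradNormSq Q := funext fun x => fderivNormSq_frobeniusVec_comp (hQd x)
  have hEL (x v) : ⟪Δ (fun y => frobeniusVec (Q y)) x,
      fderiv ℝ (fun y => frobeniusVec (Q y)) x v⟫_ℝ = fderiv ℝ (fun y => F (Q y)) x v := by
    rw [laplacian_frobeniusVec_comp hQ, fderiv_frobeniusVec_comp (hQd x), inner_frobeniusVec,
      frob_lapM_fderiv (hF.differentiable one_ne_zero _) (hQd x) htr (heq x)]
  have hpohozaev := integral_pohozaev (EuclideanSpace.basisFun (Fin 3) ℝ)
    (contDiff_frobeniusVec_comp hQ) (hF.comp (hQ.of_le one_le_two)) hEL (hnorm ▸ hint1) hint2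
  have hcoeff : (3 : ℝ) / 2 - 1 = 1 / 2 := by norm_num
  simpa only [hnorm, Fintype.card_fin, Nat.cast_ofNat, hcoeff, Function.comp_apply] using hpohozaev

/-- **Pochožaev identity.** If `F` is `C²` with `F 0 = 0`, and `Q : ℝ³ → ℝ^{3×3}`
is a `C²` symmetric traceless solution of `-ΔQ + L[∇F(Q)] = 0` with `|Q| ≤ r₂` pointwise and
`|∇Q|², F(Q)` integrable, then `∫_{ℝ³} ( (1/2)|∇Q|² + 3 F(Q) ) dx = 0`. -/
theorem stmt1 (r₂ : ℝ) (hr₂ : 0 < r₂) (F : Mat → ℝ) (hF : ContDiff ℝ 2 F) (hF0 : F 0 = 0)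
    (Q : E3 → Mat) (hQ : ContDiff ℝ 2 Q)
    (hsym : ∀ x, (Q x)ᵀ = Q x) (htr : ∀ x, Matrix.trace (Q x) = 0)
    (hbd : ∀ x, frobNorm (Q x) ≤ r₂)
    (heq : ∀ x, -lapM Q x + tracelessPart (matGrad F (Q x)) = 0)
    (hint1 : Integrable (fun x => gradNormSq Q x))
    (hint2 : Integrable (fun x => F (Q x))) :
    ∫ x : E3, ((1 : ℝ) / 2 * gradNormSq Q x + 3 * F (Q x)) = 0 := by
  exact stmt1_general F (hF.of_le one_le_two) Q hQ htr heq hint1 hint2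
end
end

section
/- Let n ≥ 1, let F : ℝⁿ → ℝ be twice continuously differentiable with F(0) = 0, and suppose there exist λ > 0 and r > 0 such that F(x) ≥ λ |x|² for all x with |x| ≤ r. Then there exists r' ∈ (0, r] such that ⟨∇F(x), x⟩ ≥ F(x) for all x with |x| ≤ r'. -/
/-! By the second-order Taylor formula for `f` and the first-order one for `f'`, the trapezoidal
rule `f x - f a = ½ (f' a + f' x) (x - a) + o(‖x - a‖²)` holds as soon as `f` is twice
differentiable at `a`. Quadratic growth makes `a` a local minimum, so `f' a = 0` and
`f' x (x - a) = 2 (f x - f a) + o(‖x - a‖²)`. For `c < 2` the surplus `(2 - c) (f x - f a)` is at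
least a positive multiple of `‖x - a‖²`, which absorbs the error. -/

open Filter Topology Asymptotics

section Bilinear

variable {𝕜 E G : Type*} [NontriviallyNormedField 𝕜] [NormedAddCommGroup E] [NormedSpace 𝕜 E]
  [NormedAddCommGroup G] [NormedSpace 𝕜 G]

theorem hasFDerivAt_bilinear_sub_self_of_symm {B : E →L[𝕜] E →L[𝕜] G}
    (hB : ∀ v w, B v w = B w v) (a x : E) :
    HasFDerivAt (fun y => B (y - a) (y - a)) ((2 : 𝕜) • B (x - a)) x := by
  have hsub : HasFDerivAt (fun y => y - a) (ContinuousLinearMap.id 𝕜 E) x :=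
    (hasFDerivAt_id x).sub_const a
  refine (B.hasFDerivAt_of_bilinear hsub hsub).congr_fderiv (ContinuousLinearMap.ext fun v => ?_)
  calc B (x - a) v + B v (x - a) = B (x - a) v + B (x - a) v := by rw [hB v]
    _ = (2 : 𝕜) • B (x - a) v := (two_smul 𝕜 _).symm

theorem clm_taylor_remainder_apply_isLittleO {L : E → E →L[𝕜] G} {L' : E →L[𝕜] E →L[𝕜] G} {a : E}
    (hL : HasFDerivAt L L' a) :
    (fun x => (L x - L a - L' (x - a)) (x - a)) =o[𝓝 a] fun x => ‖x - a‖ ^ 2 := by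
  have happly : (fun x => (L x - L a - L' (x - a)) (x - a))
      =O[𝓝 a] fun x => ‖L x - L a - L' (x - a)‖ * ‖x - a‖ :=
    isBoundedBilinearMap_apply.isBigO_comp
  have hproduct : (fun x => ‖L x - L a - L' (x - a)‖ * ‖x - a‖)
      =o[𝓝 a] fun x => ‖x - a‖ * ‖x - a‖ :=
    hL.isLittleO.norm_norm.mul_isBigO (isBigO_refl _ _)
  simpa only [sq] using happly.trans_isLittleO hproduct

end Bilinear

section Taylor

variable {E G : Type*} [NormedAddCommGroup E] [NormedSpace ℝ E]
  [NormedAddCommGroup G] [NormedSpace ℝ G]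
variable {f : E → G} {f' : E → E →L[ℝ] G} {f'' : E →L[ℝ] E →L[ℝ] G} {a : E}

theorem sub_taylor_two_isLittleO (hf : ∀ᶠ x in 𝓝 a, HasFDerivAt f (f' x) x)
    (hf' : HasFDerivAt f' f'' a) :
    (fun x => f x - f a - f' a (x - a) - (1 / 2 : ℝ) • f'' (x - a) (x - a))
      =o[𝓝 a] fun x => ‖x - a‖ ^ 2 := by
  obtain ⟨ε, hε, hball⟩ := Metric.eventually_nhds_iff_ball.1 hf
  have hsymm := second_derivative_symmetric_of_eventually hf hf'
  have hderiv : ∀ x ∈ Metric.ball a ε,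
      HasFDerivAt (fun y => f y - f' a (y - a) - (1 / 2 : ℝ) • f'' (y - a) (y - a))
        (f' x - f' a - f'' (x - a)) x := fun x hx => by
    have hlin : HasFDerivAt (fun y => f' a (y - a)) (f' a) x :=
      (f' a).hasFDerivAt.comp x ((hasFDerivAt_id x).sub_const a)
    have hquad := (hasFDerivAt_bilinear_sub_self_of_symm hsymm a x).const_smul (1 / 2 : ℝ)
    exact (((hball x hx).sub hlin).sub hquad).congr_fderiv (by module)
  have hsmall : (fun x => f' x - f' a - f'' (x - a)) =o[𝓝[Metric.ball a ε] a]
      fun x => ‖x - a‖ ^ 1 := by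
    simpa only [pow_one] using (hf'.isLittleO.mono nhdsWithin_le_nhds).norm_right
  have hmean := (convex_ball a ε).isLittleO_pow_succ (Metric.mem_ball_self hε)
    (fun x hx => (hderiv x hx).hasFDerivWithinAt) hsmall
  rw [Metric.isOpen_ball.nhdsWithin_eq (Metric.mem_ball_self hε)] at hmean
  refine hmean.congr_left fun x => ?_
  simp only [sub_self, map_zero, smul_zero, sub_zero]
  abel

theorem sub_trapezoid_isLittleO (hf : ∀ᶠ x in 𝓝 a, HasFDerivAt f (f' x) x)
    (hf' : DifferentiableAt ℝ f' a) :
    (fun x => f x - f a - (1 / 2 : ℝ) • (f' a (x - a) + f' x (x - a)))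
      =o[𝓝 a] fun x => ‖x - a‖ ^ 2 := by
  have htaylor := sub_taylor_two_isLittleO hf hf'.hasFDerivAt
  have hderiv := clm_taylor_remainder_apply_isLittleO hf'.hasFDerivAt
  refine (htaylor.sub (hderiv.const_smul_left (1 / 2 : ℝ))).congr_left fun x => ?_
  simp only [Pi.smul_apply, sub_apply]
  module

end Taylor

section QuadraticGrowth

variable {E : Type*} [NormedAddCommGroup E] [NormedSpace ℝ E]
  {f : E → ℝ} {f' : E → E →L[ℝ] ℝ} {a : E} {lam c : ℝ}

theorem eventually_mul_sub_le_fderiv_apply_of_quadratic_growth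
    (hf : ∀ᶠ x in 𝓝 a, HasFDerivAt f (f' x) x) (hf' : DifferentiableAt ℝ f' a) (hlam : 0 < lam)
    (hgrowth : ∀ᶠ x in 𝓝 a, lam * ‖x - a‖ ^ 2 ≤ f x - f a) (hc : c < 2) :
    ∀ᶠ x in 𝓝 a, c * (f x - f a) ≤ f' x (x - a) := by
  have hmin : IsLocalMin f a := hgrowth.mono fun x hx => sub_nonneg.1 (le_trans (by positivity) hx)
  have hcrit : f' a = 0 := hmin.hasFDerivAt_eq_zero hf.self_of_nhds
  have herror := (sub_trapezoid_isLittleO hf hf').bound (half_pos (mul_pos (sub_pos.2 hc) hlam))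
  filter_upwards [herror, hgrowth] with x hx hgx
  have htrap : f x - f a - 1 / 2 * f' x (x - a) ≤ (2 - c) * lam / 2 * ‖x - a‖ ^ 2 := by
    simpa [hcrit] using (Real.le_norm_self _).trans hx
  have hsurplus : (2 - c) * (lam * ‖x - a‖ ^ 2) ≤ (2 - c) * (f x - f a) :=
    mul_le_mul_of_nonneg_left hgx (sub_nonneg.2 hc.le)
  linarith

theorem stmt11_general {r : ℝ} (hf : ∀ᶠ x in 𝓝 a, HasFDerivAt f (f' x) x)
    (hf' : DifferentiableAt ℝ f' a) (hlam : 0 < lam) (hr : 0 < r)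
    (hgrowth : ∀ x, ‖x - a‖ ≤ r → lam * ‖x - a‖ ^ 2 ≤ f x - f a) (hc : c < 2) :
    ∃ r' : ℝ, 0 < r' ∧ r' ≤ r ∧ ∀ x, ‖x - a‖ ≤ r' → c * (f x - f a) ≤ f' x (x - a) := by
  have hgrowth' : ∀ᶠ x in 𝓝 a, lam * ‖x - a‖ ^ 2 ≤ f x - f a := by
    filter_upwards [Metric.closedBall_mem_nhds a hr] with x hx
    exact hgrowth x (mem_closedBall_iff_norm.1 hx)
  obtain ⟨ε, hε, hball⟩ := Metric.nhds_basis_closedBall.eventually_iff.1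
    (eventually_mul_sub_le_fderiv_apply_of_quadratic_growth hf hf' hlam hgrowth' hc)
  exact ⟨min r ε, lt_min hr hε, min_le_left r ε, fun _ hx =>
    hball (mem_closedBall_iff_norm.2 (hx.trans (min_le_right r ε)))⟩

end QuadraticGrowth

/-- Let `n ≥ 1` and `F : ℝⁿ → ℝ` be `C²` with `F 0 = 0`. If there are
`λ > 0` and `r > 0` with `F x ≥ λ |x|²` for all `|x| ≤ r`, then there is `r' ∈ (0, r]`
such that `⟨∇F x, x⟩ ≥ F x` whenever `|x| ≤ r'`. -/
theorem stmt11 (n : ℕ) (hn : 1 ≤ n) (F : EuclideanSpace ℝ (Fin n) → ℝ)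
    (hF : ContDiff ℝ 2 F) (hF0 : F 0 = 0)
    (lam r : ℝ) (hlam : 0 < lam) (hr : 0 < r)
    (hlower : ∀ x : EuclideanSpace ℝ (Fin n), ‖x‖ ≤ r → lam * ‖x‖ ^ 2 ≤ F x) :
    ∃ r' : ℝ, 0 < r' ∧ r' ≤ r ∧
      ∀ x : EuclideanSpace ℝ (Fin n), ‖x‖ ≤ r' →
        F x ≤ (inner ℝ (gradient F x) x : ℝ) := by
  have hderiv' : Differentiable ℝ (fderiv ℝ F) :=
    (hF.fderiv_right (m := 1) one_add_one_eq_two.le).differentiable one_ne_zero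
  simpa [hF0] using stmt11_general (a := 0) (c := 1)
    (.of_forall fun x => (hF.differentiable two_ne_zero x).hasFDerivAt) (hderiv' 0) hlam hr
    (by simpa [hF0] using hlower) one_lt_two
end
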